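/- Let v : ℝ³ → ℝ³ be smooth, divergence-free on ℝ³ (div v = 0), and vanishing identically on the boundary plane {x ∈ ℝ³ : x₃ = 0}. Then at every point of the form (0, 0, θ̄), the θ̄-frame component of curl curl v satisfies: ∂_z[ (curl curl v)(T(z,r̄,θ̄))·(φ'(θ̄),0) ] evaluated at (0,0,θ̄) equals κ'(θ̄)·∂_z v_r̄ + 2κ(θ̄)·∂_z∂_θ̄ v_r̄ − ∂_z∂_θ̄² v_θ̄ − ∂_z³ v_θ̄ − ∂_z∂_r̄² v_θ̄ + κ(θ̄)·∂_z∂_r̄ v_θ̄ + κ(θ̄)²·∂_z v_θ̄, with all frame components evaluated at (0,0,θ̄). (Since div v = 0, curl curl v = −Δv, so this computes the derivative of the θ̄-component of the vector Laplacian of v along the curve on the boundary.) -/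

import Mathlib

/-- Partial derivative in the `j`-th coordinate direction on Euclidean `ℝ³`. -/
noncomputable def pdE {F : Type*} [NormedAddCommGroup F] [NormedSpace ℝ F]
    (j : Fin 3) (g : EuclideanSpace ℝ (Fin 3) → F) (x : EuclideanSpace ℝ (Fin 3)) : F :=
  fderiv ℝ g x (EuclideanSpace.single j 1)

/-- Euclidean divergence `div v = ∂₁v₁ + ∂₂v₂ + ∂₃v₃`. -/
noncomputable def div3 (v : EuclideanSpace ℝ (Fin 3) → EuclideanSpace ℝ (Fin 3))
    (x : EuclideanSpace ℝ (Fin 3)) : ℝ :=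
  ∑ i : Fin 3, pdE i (fun y => v y i) x

/-- Curvature `κ(θ̄) = |φ''(θ̄)|` of a unit-speed plane curve. -/
noncomputable def curveKappa (φ : ℝ → EuclideanSpace ℝ (Fin 2)) (θ : ℝ) : ℝ :=
  ‖deriv (deriv φ) θ‖

/-- Unit normal `N(θ̄) = φ''(θ̄)/|φ''(θ̄)|` of a unit-speed plane curve. -/
noncomputable def curveN (φ : ℝ → EuclideanSpace ℝ (Fin 2)) (θ : ℝ) :
    EuclideanSpace ℝ (Fin 2) :=
  ‖deriv (deriv φ) θ‖⁻¹ • deriv (deriv φ) θ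

/-- The factor `f(r̄,θ̄) = 1 − r̄·κ(θ̄)`. -/
noncomputable def fFactor (φ : ℝ → EuclideanSpace ℝ (Fin 2)) (r θ : ℝ) : ℝ :=
  1 - r * curveKappa φ θ

/-- Embedding `ℝ² ∋ v ↦ (v, 0) ∈ ℝ³`. -/
noncomputable def emb23 (v : EuclideanSpace ℝ (Fin 2)) : EuclideanSpace ℝ (Fin 3) :=
  !₂[v 0, v 1, 0]

/-- The coordinate map `T(z,r̄,θ̄) = (φ(θ̄) + r̄·N(θ̄), z)`. -/
noncomputable def Tmap (φ : ℝ → EuclideanSpace ℝ (Fin 2)) (z r θ : ℝ) :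
    EuclideanSpace ℝ (Fin 3) :=
  !₂[(φ θ + r • curveN φ θ) 0, (φ θ + r • curveN φ θ) 1, z]

/-- Frame component `v_z(z,r̄,θ̄) = v(T(z,r̄,θ̄))·(0,0,1)`. -/
noncomputable def vzComp (φ : ℝ → EuclideanSpace ℝ (Fin 2))
    (v : EuclideanSpace ℝ (Fin 3) → EuclideanSpace ℝ (Fin 3)) (z r θ : ℝ) : ℝ :=
  inner ℝ (v (Tmap φ z r θ)) (EuclideanSpace.single 2 (1:ℝ))

/-- Frame component `v_r̄(z,r̄,θ̄) = v(T(z,r̄,θ̄))·(N(θ̄),0)`. -/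
noncomputable def vrComp (φ : ℝ → EuclideanSpace ℝ (Fin 2))
    (v : EuclideanSpace ℝ (Fin 3) → EuclideanSpace ℝ (Fin 3)) (z r θ : ℝ) : ℝ :=
  inner ℝ (v (Tmap φ z r θ)) (emb23 (curveN φ θ))

/-- Frame component `v_θ̄(z,r̄,θ̄) = v(T(z,r̄,θ̄))·(φ'(θ̄),0)`. -/
noncomputable def vθComp (φ : ℝ → EuclideanSpace ℝ (Fin 2))
    (v : EuclideanSpace ℝ (Fin 3) → EuclideanSpace ℝ (Fin 3)) (z r θ : ℝ) : ℝ :=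
  inner ℝ (v (Tmap φ z r θ)) (emb23 (deriv φ θ))

/-- `∂_z` for a function of `(z, r̄, θ̄)`. -/
noncomputable def Dz (g : ℝ → ℝ → ℝ → ℝ) (z r θ : ℝ) : ℝ := deriv (fun s => g s r θ) z

/-- `∂_r̄` for a function of `(z, r̄, θ̄)`. -/
noncomputable def Dr (g : ℝ → ℝ → ℝ → ℝ) (z r θ : ℝ) : ℝ := deriv (fun s => g z s θ) r

/-- `∂_θ̄` for a function of `(z, r̄, θ̄)`. -/
noncomputable def Dθ (g : ℝ → ℝ → ℝ → ℝ) (z r θ : ℝ) : ℝ := deriv (fun s => g z r s) θ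

/-- Euclidean curl of a vector field on `ℝ³`. -/
noncomputable def curl3 (w : EuclideanSpace ℝ (Fin 3) → EuclideanSpace ℝ (Fin 3))
    (x : EuclideanSpace ℝ (Fin 3)) : EuclideanSpace ℝ (Fin 3) :=
  !₂[pdE 1 (fun y => w y 2) x - pdE 2 (fun y => w y 1) x,
    pdE 2 (fun y => w y 0) x - pdE 0 (fun y => w y 2) x,
    pdE 0 (fun y => w y 1) x - pdE 1 (fun y => w y 0) x]

/-!
Since `div v = 0`, `curl curl v = ∇ div v − Δ v = −Δ v`, and the Laplacian at a point is the sum of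
the second directional derivatives along any orthonormal frame. On the surface `r̄ = 0` we take the
frame `(φ', 0)`, `(N, 0)`, `e₃`. The curves `z ↦ T` and `r̄ ↦ T` are straight lines along which the
frame is constant, so `∂_z²` and `∂_r̄²` of `v_θ̄` are second directional derivatives of `v`; along
`θ̄ ↦ T` the frame rotates by the Frenet equations `(φ')' = κ N`, `N' = −κ φ'`, and this rotation
accounts for every term that involves the curvature. The resulting identity holds at every height
`z`, so it may be differentiated in `z`.
-/

open Filter InnerProductSpace
open scoped Gradient Laplacian Topology

section DirectionalDerivative

variable {E F : Type*} [NormedAddCommGroup E] [NormedSpace ℝ E]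
  [NormedAddCommGroup F] [NormedSpace ℝ F]

/-- The directional derivative `∂ₐ g`. The direction comes first, so that `dirDeriv a` is an
operator on functions which can be iterated; `pdE j` is `dirDeriv (EuclideanSpace.single j 1)`. -/
noncomputable def dirDeriv (a : E) (g : E → F) (x : E) : F := fderiv ℝ g x a

theorem dirDeriv_smul (c : ℝ) (a : E) (g : E → F) (x : E) :
    dirDeriv (c • a) g x = c • dirDeriv a g x :=
  map_smul _ c a

theorem contDiff_dirDeriv {m n : WithTop ℕ∞} {g : E → F} (hg : ContDiff ℝ n g)
    (hmn : m + 1 ≤ n) (a : E) : ContDiff ℝ m (dirDeriv a g) :=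
  (hg.fderiv_right hmn).clm_apply contDiff_const

theorem differentiable_dirDeriv {g : E → F} (hg : ContDiff ℝ 2 g) (a : E) :
    Differentiable ℝ (dirDeriv a g) :=
  (contDiff_dirDeriv (m := 1) hg (by norm_num) a).differentiable one_ne_zero

theorem differentiable_fderiv {g : E → F} (hg : ContDiff ℝ 2 g) : Differentiable ℝ (fderiv ℝ g) :=
  (hg.fderiv_right (m := 1) (by norm_num)).differentiable one_ne_zero

theorem dirDeriv_dirDeriv {g : E → F} (hg : ContDiff ℝ 2 g) (a b x : E) :
    dirDeriv a (dirDeriv b g) x = fderiv ℝ (fderiv ℝ g) x a b := by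
  have hdg : HasFDerivAt (fderiv ℝ g) (fderiv ℝ (fderiv ℝ g) x) x :=
    (differentiable_fderiv hg x).hasFDerivAt
  exact (DFunLike.congr_fun (hdg.clm_apply (hasFDerivAt_const b x)).fderiv a).trans (by simp)

theorem dirDeriv_comm {g : E → F} (hg : ContDiff ℝ 2 g) (a b x : E) :
    dirDeriv a (dirDeriv b g) x = dirDeriv b (dirDeriv a g) x := by
  rw [dirDeriv_dirDeriv hg, dirDeriv_dirDeriv hg]
  exact hg.contDiffAt.isSymmSndFDerivAt (by simp) a b

theorem hasDerivAt_comp_dirDeriv {g : E → F} {γ : ℝ → E} {γ' : E} {t : ℝ}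
    (hg : DifferentiableAt ℝ g (γ t)) (hγ : HasDerivAt γ γ' t) :
    HasDerivAt (fun s => g (γ s)) (dirDeriv γ' g (γ t)) t :=
  hg.hasFDerivAt.comp_hasDerivAt t hγ

theorem hasDerivAt_dirDeriv_comp {g : E → F} (hg : ContDiff ℝ 2 g) {γ a : ℝ → E} {γ' a' : E}
    {t : ℝ} (hγ : HasDerivAt γ γ' t) (ha : HasDerivAt a a' t) :
    HasDerivAt (fun s => dirDeriv (a s) g (γ s))
      (dirDeriv γ' (dirDeriv (a t) g) (γ t) + dirDeriv a' g (γ t)) t := by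
  rw [dirDeriv_dirDeriv hg]
  exact (hasDerivAt_comp_dirDeriv (differentiable_fderiv hg _) hγ).clm_apply ha

end DirectionalDerivative

section OrthonormalFamily

variable {E : Type*} [NormedAddCommGroup E] {ι : Type*} [Fintype ι] {e : ι → E}

theorem exists_orthonormalBasis_coe_eq {𝕜 : Type*} [RCLike 𝕜] [InnerProductSpace 𝕜 E]
    [FiniteDimensional 𝕜 E] (he : Orthonormal 𝕜 e)
    (hcard : Module.finrank 𝕜 E = Fintype.card ι) : ∃ b : OrthonormalBasis ι 𝕜 E, ⇑b = e := by
  obtain ⟨b, hb⟩ := Orthonormal.exists_orthonormalBasis_extension_of_card_eq hcard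
    (s := Set.univ) (he.comp _ Subtype.val_injective)
  exact ⟨b, funext fun i => hb i (Set.mem_univ i)⟩

theorem laplacian_eq_sum_dirDeriv {F : Type*} [NormedAddCommGroup F] [NormedSpace ℝ F]
    [InnerProductSpace ℝ E] [FiniteDimensional ℝ E] (he : Orthonormal ℝ e)
    (hcard : Module.finrank ℝ E = Fintype.card ι) {g : E → F} (hg : ContDiff ℝ 2 g) (x : E) :
    Δ g x = ∑ i, dirDeriv (e i) (dirDeriv (e i) g) x := by
  obtain ⟨b, rfl⟩ := exists_orthonormalBasis_coe_eq he hcard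
  simp [laplacian_eq_iteratedFDeriv_orthonormalBasis g b, iteratedFDeriv_two_apply,
    dirDeriv_dirDeriv hg]

end OrthonormalFamily

theorem inner_add_inner_eq_zero_of_eventually_const {F : Type*} [NormedAddCommGroup F]
    [InnerProductSpace ℝ F] {f g : ℝ → F} {f' g' : F} {t c : ℝ} (hf : HasDerivAt f f' t)
    (hg : HasDerivAt g g' t) (hc : ∀ᶠ s in 𝓝 t, inner ℝ (f s) (g s) = c) :
    inner ℝ (f t) g' + inner ℝ f' (g t) = 0 :=
  (hf.inner ℝ hg).unique ((hasDerivAt_const t c).congr_of_eventuallyEq hc)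

local notation "ℝ²" => EuclideanSpace ℝ (Fin 2)
local notation "ℝ³" => EuclideanSpace ℝ (Fin 3)

section CurlCurl

variable {v : ℝ³ → ℝ³}

theorem pdE_fun_sub {F : Type*} [NormedAddCommGroup F] [NormedSpace ℝ F] {f g : ℝ³ → F} {x : ℝ³}
    (hf : DifferentiableAt ℝ f x) (hg : DifferentiableAt ℝ g x) (j : Fin 3) :
    pdE j (fun y => f y - g y) x = pdE j f x - pdE j g x := by
  simp [pdE, fderiv_fun_sub hf hg]

theorem pdE_fun_sum {F : Type*} [NormedAddCommGroup F] [NormedSpace ℝ F] {ι : Type*}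
    {s : Finset ι} {f : ι → ℝ³ → F} {x : ℝ³} (hf : ∀ i ∈ s, DifferentiableAt ℝ (f i) x)
    (j : Fin 3) : pdE j (fun y => ∑ i ∈ s, f i y) x = ∑ i ∈ s, pdE j (f i) x := by
  simp [pdE, fderiv_fun_sum hf]

theorem gradient_apply (f : ℝ³ → ℝ) (x : ℝ³) (j : Fin 3) : ∇ f x j = pdE j f x := by
  rw [pdE, ← inner_gradient_left, EuclideanSpace.inner_single_right]
  simp

theorem laplacian_apply (hv : ContDiff ℝ 2 v) (x : ℝ³) (k : Fin 3) :
    Δ v x k = ∑ j, pdE j (pdE j fun y => v y k) x := by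
  have hvk : ContDiff ℝ 2 fun y => v y k := contDiff_euclidean.1 hv k
  calc Δ v x k = Δ (fun y => v y k) x :=
        (hv.contDiffAt.laplacian_CLM_comp_left (l := EuclideanSpace.proj k)).symm
    _ = ∑ j, pdE j (pdE j fun y => v y k) x := by
        rw [laplacian_eq_sum_dirDeriv (EuclideanSpace.basisFun (Fin 3) ℝ).orthonormal (by simp) hvk]
        simp only [EuclideanSpace.basisFun_apply]
        rfl

theorem curl3_curl3 (hv : ContDiff ℝ 2 v) (x : ℝ³) :
    curl3 (curl3 v) x = ∇ (div3 v) x - Δ v x := by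
  have hcomp : ∀ k, ContDiff ℝ 2 fun y => v y k := contDiff_euclidean.1 hv
  have hpd : ∀ j k, DifferentiableAt ℝ (pdE j fun y => v y k) x := fun j k =>
    differentiable_dirDeriv (hcomp k) _ x
  have hcomm : ∀ i j k, pdE i (pdE j fun y => v y k) x = pdE j (pdE i fun y => v y k) x :=
    fun i j k => dirDeriv_comm (hcomp k) _ _ x
  have hdiv : ∀ j, pdE j (div3 v) x = ∑ i, pdE j (pdE i fun y => v y i) x := fun j =>
    pdE_fun_sum (fun i _ => hpd i i) j
  ext k
  rw [PiLp.sub_apply, gradient_apply, laplacian_apply hv, hdiv]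
  simp only [Fin.sum_univ_three]
  fin_cases k <;>
    simp only [curl3, pdE_fun_sub (hpd _ _) (hpd _ _), Matrix.cons_val, Fin.zero_eta, Fin.mk_one,
      Fin.reduceFinMk]
  · linarith [hcomm 0 1 1, hcomm 0 2 2]
  · linarith [hcomm 1 0 0, hcomm 1 2 2]
  · linarith [hcomm 2 0 0, hcomm 2 1 1]

theorem curl3_curl3_of_div3_eq_zero (hv : ContDiff ℝ 2 v) (hdiv : ∀ x, div3 v x = 0) :
    curl3 (curl3 v) = -Δ v := by
  ext1 x
  rw [curl3_curl3 hv, show div3 v = fun _ => 0 from funext hdiv, gradient_fun_const, zero_sub,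
    Pi.neg_apply]

end CurlCurl

section FrenetFrame

/-- `φ` is near `θ` a unit-speed plane curve with nonzero curvature, of the class `C³` needed to
differentiate its Frenet frame `(φ', N)` and its curvature `κ` at `θ`. -/
structure HasFrenetFrameAt (φ : ℝ → ℝ²) (θ : ℝ) : Prop where
  contDiffAt : ContDiffAt ℝ 3 φ θ
  unit_speed : ∀ᶠ s in 𝓝 θ, ‖deriv φ s‖ = 1
  deriv_deriv_ne_zero : deriv (deriv φ) θ ≠ 0

namespace HasFrenetFrameAt

variable {φ : ℝ → ℝ²} {θ : ℝ}

theorem contDiffAt_deriv (h : HasFrenetFrameAt φ θ) : ContDiffAt ℝ 2 (deriv φ) θ :=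
  h.contDiffAt.derivWithin (by norm_num)

theorem contDiffAt_deriv_deriv (h : HasFrenetFrameAt φ θ) :
    ContDiffAt ℝ 1 (deriv (deriv φ)) θ :=
  h.contDiffAt_deriv.derivWithin (by norm_num)

protected theorem eventually (h : HasFrenetFrameAt φ θ) : ∀ᶠ s in 𝓝 θ, HasFrenetFrameAt φ s := by
  filter_upwards [h.contDiffAt.eventually (by simp), eventually_eventually_nhds.2 h.unit_speed,
    h.contDiffAt_deriv_deriv.continuousAt.eventually_ne h.deriv_deriv_ne_zero]
    with s hcont hunit hne using ⟨hcont, hunit, hne⟩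

theorem curveKappa_ne_zero (h : HasFrenetFrameAt φ θ) : curveKappa φ θ ≠ 0 :=
  norm_ne_zero_iff.2 h.deriv_deriv_ne_zero

theorem hasDerivAt (h : HasFrenetFrameAt φ θ) : HasDerivAt φ (deriv φ θ) θ :=
  (h.contDiffAt.differentiableAt (by simp)).hasDerivAt

theorem hasDerivAt_deriv (h : HasFrenetFrameAt φ θ) :
    HasDerivAt (deriv φ) (curveKappa φ θ • curveN φ θ) θ := by
  have hκN : curveKappa φ θ • curveN φ θ = deriv (deriv φ) θ :=
    smul_inv_smul₀ h.curveKappa_ne_zero _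
  rw [hκN]
  exact (h.contDiffAt_deriv.differentiableAt (by simp)).hasDerivAt

theorem differentiableAt_curveKappa (h : HasFrenetFrameAt φ θ) :
    DifferentiableAt ℝ (curveKappa φ) θ :=
  (h.contDiffAt_deriv_deriv.differentiableAt (by simp)).norm ℝ h.deriv_deriv_ne_zero

theorem differentiableAt_curveN (h : HasFrenetFrameAt φ θ) :
    DifferentiableAt ℝ (curveN φ) θ :=
  (h.differentiableAt_curveKappa.inv h.curveKappa_ne_zero).smul
    (h.contDiffAt_deriv_deriv.differentiableAt (by simp))

theorem inner_deriv_curveN (h : HasFrenetFrameAt φ θ) :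
    inner ℝ (deriv φ θ) (curveN φ θ) = 0 := by
  have hself : ∀ᶠ s in 𝓝 θ, inner ℝ (deriv φ s) (deriv φ s) = 1 := by
    filter_upwards [h.unit_speed] with s hs
    rw [real_inner_self_eq_norm_sq, hs, one_pow]
  have hsum := inner_add_inner_eq_zero_of_eventually_const h.hasDerivAt_deriv h.hasDerivAt_deriv
    hself
  rw [real_inner_comm (deriv φ θ), ← two_mul, inner_smul_right] at hsum
  simpa [h.curveKappa_ne_zero] using hsum

theorem norm_curveN (h : HasFrenetFrameAt φ θ) : ‖curveN φ θ‖ = 1 :=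
  norm_smul_inv_norm (𝕜 := ℝ) h.deriv_deriv_ne_zero

theorem orthonormal (h : HasFrenetFrameAt φ θ) :
    Orthonormal ℝ ![deriv φ θ, curveN φ θ] := by
  simp [orthonormal_vecCons_iff, h.unit_speed.self_of_nhds, h.norm_curveN, h.inner_deriv_curveN]

theorem hasDerivAt_curveN (h : HasFrenetFrameAt φ θ) :
    HasDerivAt (curveN φ) (-curveKappa φ θ • deriv φ θ) θ := by
  have hN := h.differentiableAt_curveN.hasDerivAt
  have hself : ∀ {s}, HasFrenetFrameAt φ s → inner ℝ (curveN φ s) (curveN φ s) = 1 := fun hs => by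
    rw [real_inner_self_eq_norm_sq, hs.norm_curveN, one_pow]
  have hT : inner ℝ (deriv φ θ) (deriv (curveN φ) θ) = -curveKappa φ θ := by
    have hsum := inner_add_inner_eq_zero_of_eventually_const h.hasDerivAt_deriv hN
      (h.eventually.mono fun _ hs => hs.inner_deriv_curveN)
    rw [real_inner_smul_left, hself h, mul_one] at hsum
    exact eq_neg_of_add_eq_zero_left hsum
  have hN' : inner ℝ (curveN φ θ) (deriv (curveN φ) θ) = 0 := by
    have hsum := inner_add_inner_eq_zero_of_eventually_const hN hN
      (h.eventually.mono fun _ hs => hself hs)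
    rw [real_inner_comm (curveN φ θ)] at hsum
    linarith
  obtain ⟨b, hb⟩ := exists_orthonormalBasis_coe_eq h.orthonormal (by simp)
  have hexpand := b.sum_repr' (deriv (curveN φ) θ)
  simp only [hb, Fin.sum_univ_two, Matrix.cons_val_zero, Matrix.cons_val_one, hT, hN', zero_smul,
    add_zero] at hexpand
  rwa [hexpand]

end HasFrenetFrameAt

end FrenetFrame

section FrameComponents

/-- The embedding `emb23` of the plane in space, as a linear isometry. -/
noncomputable def emb23LinearIsometry : ℝ² →ₗᵢ[ℝ] ℝ³ where
  toFun := emb23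
  map_add' x y := by ext i; fin_cases i <;> simp [emb23]
  map_smul' c x := by ext i; fin_cases i <;> simp [emb23]
  norm_map' x := by simp [emb23, EuclideanSpace.norm_eq, Fin.sum_univ_three]

theorem hasDerivAt_emb23 {c : ℝ → ℝ²} {c' : ℝ²} {t : ℝ} (hc : HasDerivAt c c' t) :
    HasDerivAt (fun s => emb23 (c s)) (emb23 c') t :=
  emb23LinearIsometry.toContinuousLinearMap.hasFDerivAt.comp_hasDerivAt t hc

theorem emb23_smul (c : ℝ) (x : ℝ²) : emb23 (c • x) = c • emb23 x :=
  emb23LinearIsometry.map_smul c x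

theorem norm_emb23 (x : ℝ²) : ‖emb23 x‖ = ‖x‖ :=
  emb23LinearIsometry.norm_map x

theorem inner_emb23 (x y : ℝ²) : inner ℝ (emb23 x) (emb23 y) = inner ℝ x y :=
  emb23LinearIsometry.inner_map_map x y

theorem orthonormal_emb23_single {a b : ℝ²} (h : Orthonormal ℝ ![a, b]) :
    Orthonormal ℝ ![emb23 a, emb23 b, EuclideanSpace.single 2 1] := by
  have hz : ∀ x, inner ℝ (emb23 x) (EuclideanSpace.single 2 (1 : ℝ)) = 0 := fun x => by
    simp [EuclideanSpace.inner_single_right, emb23]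
  simpa [orthonormal_vecCons_iff, norm_emb23, inner_emb23, hz, Fin.forall_fin_two] using h

variable {φ : ℝ → ℝ²} {v : ℝ³ → ℝ³}

theorem Tmap_eq_emb23_add (φ : ℝ → ℝ²) (z r θ : ℝ) :
    Tmap φ z r θ = emb23 (φ θ + r • curveN φ θ) + z • EuclideanSpace.single 2 1 := by
  ext i
  fin_cases i <;> simp [Tmap, emb23]

theorem hasDerivAt_Tmap_z (φ : ℝ → ℝ²) (z r θ : ℝ) :
    HasDerivAt (fun s => Tmap φ s r θ) (EuclideanSpace.single 2 1) z := by
  simp only [Tmap_eq_emb23_add]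
  simpa using ((hasDerivAt_id z).smul_const (EuclideanSpace.single 2 1)).const_add
    (emb23 (φ θ + r • curveN φ θ))

theorem hasDerivAt_Tmap_r (φ : ℝ → ℝ²) (z r θ : ℝ) :
    HasDerivAt (fun s => Tmap φ z s θ) (emb23 (curveN φ θ)) r := by
  have hline : HasDerivAt (fun s => φ θ + s • curveN φ θ) (curveN φ θ) r := by
    simpa using ((hasDerivAt_id r).smul_const (curveN φ θ)).const_add (φ θ)
  simpa only [Tmap_eq_emb23_add] using (hasDerivAt_emb23 hline).add_const _

theorem differentiable_vrComp (hv : Differentiable ℝ v) (r θ : ℝ) :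
    Differentiable ℝ fun z => vrComp φ v z r θ := fun z =>
  ((hv _).comp z (hasDerivAt_Tmap_z φ z r θ).differentiableAt).inner ℝ (differentiableAt_const _)

theorem differentiable_vθComp (hv : Differentiable ℝ v) (r θ : ℝ) :
    Differentiable ℝ fun z => vθComp φ v z r θ := fun z =>
  ((hv _).comp z (hasDerivAt_Tmap_z φ z r θ).differentiableAt).inner ℝ (differentiableAt_const _)

theorem Dz_vθComp (hv : Differentiable ℝ v) (z r θ : ℝ) :
    Dz (vθComp φ v) z r θ = vθComp φ (dirDeriv (EuclideanSpace.single 2 1) v) z r θ := by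
  have hderiv := (hasDerivAt_comp_dirDeriv (hv _) (hasDerivAt_Tmap_z φ z r θ)).inner ℝ
    (hasDerivAt_const z (emb23 (deriv φ θ)))
  exact hderiv.deriv.trans (by simp [vθComp])

theorem Dz_Dz_vθComp (hv : ContDiff ℝ 2 v) (z r θ : ℝ) :
    Dz (Dz (vθComp φ v)) z r θ =
      vθComp φ (dirDeriv (EuclideanSpace.single 2 1)
        (dirDeriv (EuclideanSpace.single 2 1) v)) z r θ := by
  rw [← Dz_vθComp (differentiable_dirDeriv hv _)]
  exact congrArg (deriv · z) (funext fun s => Dz_vθComp (hv.differentiable two_ne_zero) s r θ)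

theorem Dr_vθComp (hv : Differentiable ℝ v) (z r θ : ℝ) :
    Dr (vθComp φ v) z r θ = vθComp φ (dirDeriv (emb23 (curveN φ θ)) v) z r θ := by
  have hderiv := (hasDerivAt_comp_dirDeriv (hv _) (hasDerivAt_Tmap_r φ z r θ)).inner ℝ
    (hasDerivAt_const r (emb23 (deriv φ θ)))
  exact hderiv.deriv.trans (by simp [vθComp])

theorem Dr_Dr_vθComp (hv : ContDiff ℝ 2 v) (z r θ : ℝ) :
    Dr (Dr (vθComp φ v)) z r θ =
      vθComp φ (dirDeriv (emb23 (curveN φ θ)) (dirDeriv (emb23 (curveN φ θ)) v)) z r θ := by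
  rw [← Dr_vθComp (differentiable_dirDeriv hv _)]
  exact congrArg (deriv · r) (funext fun s => Dr_vθComp (hv.differentiable two_ne_zero) z s θ)

theorem differentiable_Dr_vθComp (hv : ContDiff ℝ 2 v) (r θ : ℝ) :
    Differentiable ℝ fun z => Dr (vθComp φ v) z r θ := by
  simp only [Dr_vθComp (hv.differentiable two_ne_zero)]
  exact differentiable_vθComp (differentiable_dirDeriv hv _) r θ

theorem differentiable_Dr_Dr_vθComp (hv : ContDiff ℝ 3 v) (r θ : ℝ) :
    Differentiable ℝ fun z => Dr (Dr (vθComp φ v)) z r θ := by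
  simp only [Dr_Dr_vθComp (hv.of_le (by norm_num))]
  exact differentiable_vθComp
    (differentiable_dirDeriv (contDiff_dirDeriv hv (by norm_num) _) _) r θ

theorem differentiable_Dz_Dz_vθComp (hv : ContDiff ℝ 3 v) (r θ : ℝ) :
    Differentiable ℝ fun z => Dz (Dz (vθComp φ v)) z r θ := by
  simp only [Dz_Dz_vθComp (hv.of_le (by norm_num))]
  exact differentiable_vθComp
    (differentiable_dirDeriv (contDiff_dirDeriv hv (by norm_num) _) _) r θ

namespace HasFrenetFrameAt

variable {θ : ℝ}

theorem hasDerivAt_inner_emb23_deriv (h : HasFrenetFrameAt φ θ) {u : ℝ → ℝ³} {u' : ℝ³}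
    (hu : HasDerivAt u u' θ) :
    HasDerivAt (fun s => inner ℝ (u s) (emb23 (deriv φ s)))
      (inner ℝ u' (emb23 (deriv φ θ)) + curveKappa φ θ * inner ℝ (u θ) (emb23 (curveN φ θ))) θ := by
  have hderiv := hu.inner ℝ (hasDerivAt_emb23 h.hasDerivAt_deriv)
  rwa [emb23_smul, inner_smul_right, add_comm] at hderiv

theorem hasDerivAt_inner_emb23_curveN (h : HasFrenetFrameAt φ θ) {u : ℝ → ℝ³} {u' : ℝ³}
    (hu : HasDerivAt u u' θ) :
    HasDerivAt (fun s => inner ℝ (u s) (emb23 (curveN φ s)))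
      (inner ℝ u' (emb23 (curveN φ θ)) - curveKappa φ θ * inner ℝ (u θ) (emb23 (deriv φ θ))) θ := by
  have hderiv := hu.inner ℝ (hasDerivAt_emb23 h.hasDerivAt_curveN)
  rwa [emb23_smul, inner_smul_right, neg_mul, neg_add_eq_sub] at hderiv

theorem hasDerivAt_Tmap_θ (h : HasFrenetFrameAt φ θ) (z : ℝ) :
    HasDerivAt (fun s => Tmap φ z 0 s) (emb23 (deriv φ θ)) θ := by
  simpa only [Tmap_eq_emb23_add, zero_smul, add_zero] using
    (hasDerivAt_emb23 h.hasDerivAt).add_const _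

theorem hasDerivAt_vrComp (h : HasFrenetFrameAt φ θ) (hv : Differentiable ℝ v) (z : ℝ) :
    HasDerivAt (fun s => vrComp φ v z 0 s)
      (vrComp φ (dirDeriv (emb23 (deriv φ θ)) v) z 0 θ - curveKappa φ θ * vθComp φ v z 0 θ) θ :=
  h.hasDerivAt_inner_emb23_curveN (hasDerivAt_comp_dirDeriv (hv _) (h.hasDerivAt_Tmap_θ z))

theorem hasDerivAt_vθComp (h : HasFrenetFrameAt φ θ) (hv : Differentiable ℝ v) (z : ℝ) :
    HasDerivAt (fun s => vθComp φ v z 0 s)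
      (vθComp φ (dirDeriv (emb23 (deriv φ θ)) v) z 0 θ + curveKappa φ θ * vrComp φ v z 0 θ) θ :=
  h.hasDerivAt_inner_emb23_deriv (hasDerivAt_comp_dirDeriv (hv _) (h.hasDerivAt_Tmap_θ z))

theorem hasDerivAt_vθComp_dirDeriv (h : HasFrenetFrameAt φ θ) (hv : ContDiff ℝ 2 v) (z : ℝ) :
    HasDerivAt (fun s => vθComp φ (dirDeriv (emb23 (deriv φ s)) v) z 0 s)
      (vθComp φ (dirDeriv (emb23 (deriv φ θ)) (dirDeriv (emb23 (deriv φ θ)) v)) z 0 θ +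
        curveKappa φ θ * vθComp φ (dirDeriv (emb23 (curveN φ θ)) v) z 0 θ +
        curveKappa φ θ * vrComp φ (dirDeriv (emb23 (deriv φ θ)) v) z 0 θ) θ := by
  have hderiv := h.hasDerivAt_inner_emb23_deriv <|
    hasDerivAt_dirDeriv_comp hv (h.hasDerivAt_Tmap_θ z) (hasDerivAt_emb23 h.hasDerivAt_deriv)
  rwa [emb23_smul, dirDeriv_smul, inner_add_left, real_inner_smul_left] at hderiv

theorem Dθ_Dθ_vθComp (h : HasFrenetFrameAt φ θ) (hv : ContDiff ℝ 2 v) (z : ℝ) :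
    Dθ (Dθ (vθComp φ v)) z 0 θ =
      vθComp φ (dirDeriv (emb23 (deriv φ θ)) (dirDeriv (emb23 (deriv φ θ)) v)) z 0 θ +
        curveKappa φ θ * vθComp φ (dirDeriv (emb23 (curveN φ θ)) v) z 0 θ +
        2 * curveKappa φ θ * vrComp φ (dirDeriv (emb23 (deriv φ θ)) v) z 0 θ +
        deriv (curveKappa φ) θ * vrComp φ v z 0 θ - curveKappa φ θ ^ 2 * vθComp φ v z 0 θ := by
  have hdv : Differentiable ℝ v := hv.differentiable two_ne_zero
  have hnear : (fun s => Dθ (vθComp φ v) z 0 s) =ᶠ[𝓝 θ] fun s =>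
      vθComp φ (dirDeriv (emb23 (deriv φ s)) v) z 0 s + curveKappa φ s * vrComp φ v z 0 s :=
    h.eventually.mono fun s hs => (hs.hasDerivAt_vθComp hdv z).deriv
  have hderiv := (h.hasDerivAt_vθComp_dirDeriv hv z).add
    (h.differentiableAt_curveKappa.hasDerivAt.mul (h.hasDerivAt_vrComp hdv z))
  rw [Dθ, hnear.deriv_eq]
  refine hderiv.deriv.trans ?_
  ring

theorem laplacian_eq_sum_frenet (h : HasFrenetFrameAt φ θ) (hv : ContDiff ℝ 2 v) (x : ℝ³) :
    Δ v x = dirDeriv (emb23 (deriv φ θ)) (dirDeriv (emb23 (deriv φ θ)) v) x +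
      dirDeriv (emb23 (curveN φ θ)) (dirDeriv (emb23 (curveN φ θ)) v) x +
      dirDeriv (EuclideanSpace.single 2 1) (dirDeriv (EuclideanSpace.single 2 1) v) x := by
  rw [laplacian_eq_sum_dirDeriv (orthonormal_emb23_single h.orthonormal) (by simp) hv,
    Fin.sum_univ_three]
  rfl

theorem vθComp_laplacian (h : HasFrenetFrameAt φ θ) (hv : ContDiff ℝ 2 v) (z : ℝ) :
    vθComp φ (Δ v) z 0 θ =
      Dθ (Dθ (vθComp φ v)) z 0 θ + Dz (Dz (vθComp φ v)) z 0 θ + Dr (Dr (vθComp φ v)) z 0 θ -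
        curveKappa φ θ * Dr (vθComp φ v) z 0 θ - 2 * curveKappa φ θ * Dθ (vrComp φ v) z 0 θ -
        deriv (curveKappa φ) θ * vrComp φ v z 0 θ - curveKappa φ θ ^ 2 * vθComp φ v z 0 θ := by
  have hdv : Differentiable ℝ v := hv.differentiable two_ne_zero
  have hDθ : Dθ (vrComp φ v) z 0 θ = _ := (h.hasDerivAt_vrComp hdv z).deriv
  have hsum : vθComp φ (Δ v) z 0 θ =
      vθComp φ (dirDeriv (emb23 (deriv φ θ)) (dirDeriv (emb23 (deriv φ θ)) v)) z 0 θ +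
        vθComp φ (dirDeriv (emb23 (curveN φ θ)) (dirDeriv (emb23 (curveN φ θ)) v)) z 0 θ +
        vθComp φ (dirDeriv (EuclideanSpace.single 2 1)
          (dirDeriv (EuclideanSpace.single 2 1) v)) z 0 θ := by
    simp only [vθComp, h.laplacian_eq_sum_frenet hv, inner_add_left]
  rw [hsum, h.Dθ_Dθ_vθComp hv, Dz_Dz_vθComp hv, Dr_Dr_vθComp hv, Dr_vθComp hdv, hDθ]
  ring

theorem vθComp_curl3_curl3 (h : HasFrenetFrameAt φ θ) (hv : ContDiff ℝ 2 v)
    (hdiv : ∀ x, div3 v x = 0) (z : ℝ) :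
    vθComp φ (curl3 (curl3 v)) z 0 θ =
      deriv (curveKappa φ) θ * vrComp φ v z 0 θ + 2 * curveKappa φ θ * Dθ (vrComp φ v) z 0 θ -
        Dθ (Dθ (vθComp φ v)) z 0 θ - Dz (Dz (vθComp φ v)) z 0 θ - Dr (Dr (vθComp φ v)) z 0 θ +
        curveKappa φ θ * Dr (vθComp φ v) z 0 θ + curveKappa φ θ ^ 2 * vθComp φ v z 0 θ := by
  have hneg : vθComp φ (curl3 (curl3 v)) z 0 θ = -vθComp φ (Δ v) z 0 θ := by
    rw [curl3_curl3_of_div3_eq_zero hv hdiv]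
    exact inner_neg_left _ _
  rw [hneg, h.vθComp_laplacian hv]
  ring

theorem differentiable_Dθ_vrComp (h : HasFrenetFrameAt φ θ) (hv : ContDiff ℝ 2 v) :
    Differentiable ℝ fun z => Dθ (vrComp φ v) z 0 θ := by
  have hdv : Differentiable ℝ v := hv.differentiable two_ne_zero
  rw [show (fun z => Dθ (vrComp φ v) z 0 θ) = _ from
    funext fun z => (h.hasDerivAt_vrComp hdv z).deriv]
  exact (differentiable_vrComp (differentiable_dirDeriv hv _) 0 θ).sub
    ((differentiable_vθComp hdv 0 θ).const_mul _)

theorem differentiable_Dθ_Dθ_vθComp (h : HasFrenetFrameAt φ θ) (hv : ContDiff ℝ 3 v) :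
    Differentiable ℝ fun z => Dθ (Dθ (vθComp φ v)) z 0 θ := by
  have hv₂ : ContDiff ℝ 2 v := hv.of_le (by norm_num)
  have hdv : Differentiable ℝ v := hv₂.differentiable two_ne_zero
  have hd (a : ℝ³) : Differentiable ℝ (dirDeriv a v) := differentiable_dirDeriv hv₂ a
  have hdd (a b : ℝ³) : Differentiable ℝ (dirDeriv a (dirDeriv b v)) :=
    differentiable_dirDeriv (contDiff_dirDeriv hv (by norm_num) b) a
  simp only [h.Dθ_Dθ_vθComp hv₂]
  exact ((((differentiable_vθComp (hdd _ _) 0 θ).add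
    ((differentiable_vθComp (hd _) 0 θ).const_mul _)).add
    ((differentiable_vrComp (hd _) 0 θ).const_mul _)).add
    ((differentiable_vrComp hdv 0 θ).const_mul _)).sub
    ((differentiable_vθComp hdv 0 θ).const_mul _)

end HasFrenetFrameAt

end FrameComponents

theorem stmt10_general {φ : ℝ → ℝ²} {θ : ℝ} (h : HasFrenetFrameAt φ θ) {v : ℝ³ → ℝ³}
    (hv : ContDiff ℝ 3 v) (hdiv : ∀ x, div3 v x = 0) (z : ℝ) :
    Dz (vθComp φ (curl3 (curl3 v))) z 0 θ =
      deriv (curveKappa φ) θ * Dz (vrComp φ v) z 0 θ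
        + 2 * curveKappa φ θ * Dz (Dθ (vrComp φ v)) z 0 θ
        - Dz (Dθ (Dθ (vθComp φ v))) z 0 θ
        - Dz (Dz (Dz (vθComp φ v))) z 0 θ
        - Dz (Dr (Dr (vθComp φ v))) z 0 θ
        + curveKappa φ θ * Dz (Dr (vθComp φ v)) z 0 θ
        + curveKappa φ θ ^ 2 * Dz (vθComp φ v) z 0 θ := by
  have hv₂ : ContDiff ℝ 2 v := hv.of_le (by norm_num)
  have hdv : Differentiable ℝ v := hv₂.differentiable two_ne_zero
  have hr := (differentiable_vrComp (φ := φ) hdv 0 θ z).hasDerivAt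
  have hθr := (h.differentiable_Dθ_vrComp hv₂ z).hasDerivAt
  have hθθ := (h.differentiable_Dθ_Dθ_vθComp hv z).hasDerivAt
  have hzz := (differentiable_Dz_Dz_vθComp (φ := φ) hv 0 θ z).hasDerivAt
  have hrr := (differentiable_Dr_Dr_vθComp (φ := φ) hv 0 θ z).hasDerivAt
  have hrθ := (differentiable_Dr_vθComp (φ := φ) hv₂ 0 θ z).hasDerivAt
  have hθ := (differentiable_vθComp (φ := φ) hdv 0 θ z).hasDerivAt
  rw [Dz, funext fun s => h.vθComp_curl3_curl3 hv₂ hdiv s]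
  exact (((((((hr.const_mul _).add (hθr.const_mul _)).sub hθθ).sub hzz).sub hrr).add
    (hrθ.const_mul _)).add (hθ.const_mul _)).deriv

/-- For a smooth divergence-free vector field `v` vanishing on the
boundary plane `{x₃ = 0}`, at every point `(0,0,θ̄)` the `θ̄`-frame component of
`curl curl v` (`= −Δv`) satisfies
`∂_z[(curl curl v)(T)·(φ',0)] = κ'·∂_z v_r̄ + 2κ·∂_z∂_θ̄ v_r̄ − ∂_z∂_θ̄² v_θ̄ − ∂_z³ v_θ̄
  − ∂_z∂_r̄² v_θ̄ + κ·∂_z∂_r̄ v_θ̄ + κ²·∂_z v_θ̄`. -/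
theorem stmt10 (δ : ℝ) (hδ : 0 < δ) (φ : ℝ → EuclideanSpace ℝ (Fin 2))
    (hφ : ContDiffOn ℝ (⊤ : ℕ∞) φ (Set.Ioo (-δ) δ))
    (hunit : ∀ θ ∈ Set.Ioo (-δ) δ, ‖deriv φ θ‖ = 1)
    (hcurv : ∀ θ ∈ Set.Ioo (-δ) δ, deriv (deriv φ) θ ≠ 0)
    (v : EuclideanSpace ℝ (Fin 3) → EuclideanSpace ℝ (Fin 3))
    (hv : ContDiff ℝ (⊤ : ℕ∞) v)
    (hdiv : ∀ x : EuclideanSpace ℝ (Fin 3), div3 v x = 0)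
    (hbd : ∀ x : EuclideanSpace ℝ (Fin 3), x 2 = 0 → v x = 0) :
    ∀ θ ∈ Set.Ioo (-δ) δ,
      Dz (fun z' r' θ' =>
          (inner ℝ (curl3 (curl3 v) (Tmap φ z' r' θ')) (emb23 (deriv φ θ')) : ℝ)) 0 0 θ
        = deriv (curveKappa φ) θ * Dz (vrComp φ v) 0 0 θ
          + 2 * curveKappa φ θ * Dz (Dθ (vrComp φ v)) 0 0 θ
          - Dz (Dθ (Dθ (vθComp φ v))) 0 0 θ
          - Dz (Dz (Dz (vθComp φ v))) 0 0 θ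
          - Dz (Dr (Dr (vθComp φ v))) 0 0 θ
          + curveKappa φ θ * Dz (Dr (vθComp φ v)) 0 0 θ
          + curveKappa φ θ ^ 2 * Dz (vθComp φ v) 0 0 θ := by
  intro θ hθ
  have hsmooth : (3 : WithTop ℕ∞) ≤ (⊤ : ℕ∞) := WithTop.coe_le_coe.2 le_top
  have hnhds : Set.Ioo (-δ) δ ∈ 𝓝 θ := Ioo_mem_nhds hθ.1 hθ.2
  have hframe : HasFrenetFrameAt φ θ :=
    ⟨(hφ.contDiffAt hnhds).of_le hsmooth, eventually_of_mem hnhds hunit, hcurv θ hθ⟩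
  exact stmt10_general hframe (hv.of_le hsmooth) hdiv 0
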